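/- Let R be a basic left Harada algebra with modules P_{ij} := rad^{j-1}(e_{i1}R) as below, let I be the two-sided ideal I := ⊕_{i,j} rad^{n_i-j+1}(e_{ij}R), and set R̄ := R/I. For fixed i and indices 1 ≤ k < l ≤ n_i and 1 ≤ s < t ≤ n_i, the modules P_{ik}/P_{il} and P_{is}/P_{it} are annihilated by I and hence are right R̄-modules, and there is a K-vector space isomorphism Ext^1_R(P_{ik}/P_{il}, P_{is}/P_{it}) ≅ Ext^1_{R̄}(P_{ik}/P_{il}, P_{is}/P_{it}). -/

import Mathlib

/-!
Common setup.  `K` is an algebraically closed field and `R` a finite-dimensional associative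
unital `K`-algebra.  Right `R`-modules are formalized as modules over the opposite ring `Rᵐᵒᵖ`
(so that `MulOpposite.op r • x = x * r`).
-/

open MulOpposite

/-- The right ideal `xR` of a ring `R`, as a submodule of `R` over `Rᵐᵒᵖ`. -/
def rightIdeal (R : Type) [Ring R] (x : R) : Submodule Rᵐᵒᵖ R :=
  Submodule.span Rᵐᵒᵖ {x}

/-- The Jacobson radical of a submodule `N` (the intersection of the maximal submodules of the
module `N`), viewed as a submodule of the ambient module.  Iterating this operation gives the
iterated radicals `rad^k`. -/
def radSub {A M : Type} [Ring A] [AddCommGroup M] [Module A M] (N : Submodule A M) :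
    Submodule A M :=
  Submodule.map N.subtype (sInf {P : Submodule A ↥N | IsCoatom P})

/-- A module is indecomposable if it is nonzero and admits no nontrivial direct sum
decomposition. -/
def IsIndecomposableMod (A M : Type) [Ring A] [AddCommGroup M] [Module A M] : Prop :=
  Nontrivial M ∧ ∀ N N' : Submodule A M, IsCompl N N' → N = ⊥ ∨ N' = ⊥

/-- A module has projective dimension at most one iff it admits a surjection from a projective
module with projective kernel. -/
def PdLeOne (A : Type) [Ring A] (M : Type) [AddCommGroup M] [Module A M] : Prop :=
  ∃ (P : ModuleCat.{0} A) (f : ↥P →ₗ[A] M),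
    Module.Projective A ↥P ∧ Function.Surjective f ∧
      Module.Projective A ↥(LinearMap.ker f)

/-- `Ext¹_A(M,N) = 0`, expressed by the splitting of every short exact sequence
`0 → N → E → M → 0`. -/
def Ext1Zero (A : Type) [Ring A] (M N : Type) [AddCommGroup M] [Module A M]
    [AddCommGroup N] [Module A N] : Prop :=
  ∀ (E : ModuleCat.{0} A) (i : N →ₗ[A] ↥E) (p : ↥E →ₗ[A] M),
    Function.Injective i → Function.Surjective p → LinearMap.range i = LinearMap.ker p →
    ∃ s : M →ₗ[A] ↥E, p.comp s = LinearMap.id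

/-- `X ∈ add T` : `X` is a direct summand of a finite direct sum of copies of `T`. -/
def InAdd (A : Type) [Ring A] (T X : Type) [AddCommGroup T] [Module A T]
    [AddCommGroup X] [Module A X] : Prop :=
  ∃ (k : ℕ) (f : X →ₗ[A] (Fin k → T)) (g : (Fin k → T) →ₗ[A] X),
    g.comp f = LinearMap.id

/-- `T` is a (finitely generated) tilting right `R`-module: projective dimension at most one,
no self-extensions, and there is a short exact sequence `0 → R → T₀ → T₁ → 0` with
`T₀, T₁ ∈ add T`. -/
def IsTiltingRight (R : Type) [Ring R] (T : Type) [AddCommGroup T] [Module Rᵐᵒᵖ T] : Prop :=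
  Module.Finite Rᵐᵒᵖ T ∧ PdLeOne Rᵐᵒᵖ T ∧ Ext1Zero Rᵐᵒᵖ T T ∧
    ∃ (T₀ T₁ : ModuleCat.{0} Rᵐᵒᵖ) (f : R →ₗ[Rᵐᵒᵖ] ↥T₀) (g : ↥T₀ →ₗ[Rᵐᵒᵖ] ↥T₁),
      InAdd Rᵐᵒᵖ T ↥T₀ ∧ InAdd Rᵐᵒᵖ T ↥T₁ ∧
        Function.Injective f ∧ Function.Surjective g ∧ LinearMap.range f = LinearMap.ker g

/-- `T` is basic: it is an (internal) direct sum of pairwise non-isomorphic indecomposable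
submodules. -/
def IsBasicMod (A : Type) [Ring A] (T : Type) [AddCommGroup T] [Module A T] : Prop :=
  ∃ (k : ℕ) (N : Fin k → Submodule A T),
    DirectSum.IsInternal N ∧ (∀ a, IsIndecomposableMod A ↥(N a)) ∧
      ∀ a b, a ≠ b → IsEmpty (↥(N a) ≃ₗ[A] ↥(N b))

/-- The setoid identifying isomorphic modules (among those with property `P`). -/
def isoSetoid (A : Type) [Ring A] (P : ModuleCat.{0} A → Prop) :
    Setoid {M : ModuleCat.{0} A // P M} where
  r M N := Nonempty (↥M.1 ≃ₗ[A] ↥N.1)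
  iseqv := ⟨fun M => ⟨LinearEquiv.refl A ↥M.1⟩, fun ⟨e⟩ => ⟨e.symm⟩,
    fun ⟨e⟩ ⟨f⟩ => ⟨e.trans f⟩⟩

/-- The data exhibiting a ring `R` as a basic left Harada algebra:
a complete set `{e i j}` of orthogonal primitive idempotents with pairwise non-isomorphic
right ideals `(e i j)R` (`R` is basic), such that each `(e i 0)R` is an injective right
module, and `(e i j)R ≅ rad ((e i (j-1))R)` for `j ≥ 1`.  (Indices are shifted by one from
the paper: the paper's `e_{ij}` is `e i (j-1)` here.) -/
structure HaradaData (R : Type) [Ring R] : Type where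
  m : ℕ
  hm : 0 < m
  n : Fin m → ℕ
  hn : ∀ i, 0 < n i
  e : (i : Fin m) → Fin (n i) → R
  idem : ∀ i j, IsIdempotentElem (e i j)
  orth : ∀ p q : Σ i : Fin m, Fin (n i), p ≠ q → e p.1 p.2 * e q.1 q.2 = 0
  sum_eq_one : ∑ p : Σ i : Fin m, Fin (n i), e p.1 p.2 = 1
  indec : ∀ i j, IsIndecomposableMod Rᵐᵒᵖ ↥(rightIdeal R (e i j))
  basic : ∀ p q : Σ i : Fin m, Fin (n i), p ≠ q →
    IsEmpty (↥(rightIdeal R (e p.1 p.2)) ≃ₗ[Rᵐᵒᵖ] ↥(rightIdeal R (e q.1 q.2)))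
  inj : ∀ i, Module.Injective Rᵐᵒᵖ ↥(rightIdeal R (e i ⟨0, hn i⟩))
  rad_iso : ∀ (i : Fin m) (j : Fin (n i)), 0 < j.val →
    Nonempty (↥(rightIdeal R (e i j)) ≃ₗ[Rᵐᵒᵖ]
      ↥(radSub (rightIdeal R (e i ⟨j.val - 1, Nat.lt_of_le_of_lt (Nat.sub_le j.val 1) j.isLt⟩))))

variable {R : Type} [Ring R]

/-- `H.P i j = rad^j ((e i 0)R)`; this is the paper's `P_{i,j+1} = rad^j (e_{i1}R)`,
a submodule of `R`. -/
def HaradaData.P (H : HaradaData R) (i : Fin H.m) (j : Fin (H.n i)) : Submodule Rᵐᵒᵖ R :=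
  radSub^[j.val] (rightIdeal R (H.e i ⟨0, H.hn i⟩))

/-- The quotient module `P_{ik}/P_{il}` (for `l ≥ k` we have `H.P i l ≤ H.P i k`). -/
abbrev HaradaData.Quot (H : HaradaData R) (i : Fin H.m) (k l : Fin (H.n i)) : Type :=
  ↥(H.P i k) ⧸ Submodule.comap (H.P i k).subtype (H.P i l)

/-- The last index (the paper's `n_i`) in `Fin (H.n i)`. -/
def HaradaData.last (H : HaradaData R) (i : Fin H.m) : Fin (H.n i) :=
  ⟨H.n i - 1, Nat.sub_lt (H.hn i) one_pos⟩

/-- The right ideal `I = ⊕_{i,j} rad^{n_i - j + 1}(e_{ij}R)` of the paper. -/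
def HaradaData.I (H : HaradaData R) : Submodule Rᵐᵒᵖ R :=
  ⨆ p : Σ i : Fin H.m, Fin (H.n i),
    radSub^[H.n p.1 - p.2.val] (rightIdeal R (H.e p.1 p.2))

/-- The submodule `T·I` of a right module `T`, for `I` a right ideal of `R`. -/
def smulSub (I : Submodule Rᵐᵒᵖ R) (T : Type) [AddCommGroup T] [Module Rᵐᵒᵖ T] :
    Submodule Rᵐᵒᵖ T :=
  Submodule.span Rᵐᵒᵖ {x : T | ∃ (t : T) (r : R), r ∈ I ∧ x = op r • t}

/-- Restriction of scalars along `π : R →+* S`, turning a right `S`-module into a right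
`R`-module (type synonym). -/
@[nolint unusedArguments]
def RestrictRight {R S : Type} [Ring R] [Ring S] (_ : R →+* S) (N : Type) [AddCommGroup N]
    [Module Sᵐᵒᵖ N] : Type := N

instance {R S : Type} [Ring R] [Ring S] (π : R →+* S) (N : Type) [AddCommGroup N]
    [Module Sᵐᵒᵖ N] : AddCommGroup (RestrictRight π N) := inferInstanceAs (AddCommGroup N)

instance {R S : Type} [Ring R] [Ring S] (π : R →+* S) (N : Type) [AddCommGroup N]
    [Module Sᵐᵒᵖ N] : Module Rᵐᵒᵖ (RestrictRight π N) := Module.compHom N (RingHom.op π)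

/-- The first Ext group `Ext¹_A(X,Y)` of right modules, as a `K`-vector space (computed in the
`K`-linear abelian category of `A`-modules). -/
noncomputable def ext1 (K A : Type) [Field K] [Ring A] [Algebra K A]
    (X Y : ModuleCat.{0} A) : ModuleCat K :=
  ((Ext K (ModuleCat.{0} A) 1).obj (Opposite.op X)).obj Y

section cat
open CategoryTheory Limits ZeroObject
variable {C : Type*} [Category C] [Abelian C]

noncomputable def twoX (P1 P0 : C) : ℕ → C
  | 0 => P0
  | 1 => P1
  | _ + 2 => 0

noncomputable def twoD {P1 P0 : C} (f : P1 ⟶ P0) : (i j : ℕ) → (twoX P1 P0 i ⟶ twoX P1 P0 j)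
  | 1, 0 => f
  | 0, _ => 0
  | 1, _ + 1 => 0
  | _ + 2, _ => 0

noncomputable def twoComplex {P1 P0 : C} (f : P1 ⟶ P0) : ChainComplex C ℕ where
  X := twoX P1 P0
  d := twoD f
  shape := by
    rintro (_ | _ | i) (_ | j) h
    all_goals first | rfl | (exact absurd rfl h)
  d_comp_d' := by
    rintro (_ | _ | i) (_ | j) k h h'
    all_goals first | exact zero_comp | skip
    · exact absurd h' (Nat.succ_ne_zero _)

theorem twoComplex_quasi (S : ShortComplex C) (hS : S.ShortExact) :
    QuasiIso ((ChainComplex.toSingle₀Equiv (twoComplex S.f) S.X₃).symm ⟨S.g, S.zero⟩) where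
  quasiIsoAt n := by
    obtain _ | _ | n := n
    · rw [ChainComplex.quasiIsoAt₀_iff, ShortComplex.quasiIso_iff_of_zeros' _ rfl rfl rfl]
      refine (ShortComplex.exact_and_epi_g_iff_of_iso ?_).2 ⟨hS.exact, hS.epi_g⟩
      refine ShortComplex.isoMk (Iso.refl _) (Iso.refl _) (Iso.refl _) ?_ ?_
      · exact (Category.id_comp _).trans (Category.comp_id _).symm
      · refine (Category.id_comp _).trans (Eq.trans ?_ (Category.comp_id _).symm)
        exact (ChainComplex.toSingle₀Equiv_symm_apply_f_zero (C := twoComplex S.f) S.g S.zero).symm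
    · rw [quasiIsoAt_iff_exactAt' (hL := ChainComplex.exactAt_succ_single_obj ..),
          HomologicalComplex.exactAt_iff' _ 2 1 0 (by simp) (by simp)]
      have := hS.mono_f
      exact (ShortComplex.exact_iff_mono _ rfl).2 this
    · rw [quasiIsoAt_iff_exactAt' (hL := ChainComplex.exactAt_succ_single_obj ..),
          HomologicalComplex.exactAt_iff' _ (n+3) (n+2) (n+1) (by simp) (by simp)]
      exact ShortComplex.exact_of_isZero_X₂ _ (isZero_zero C)

noncomputable def twoRes (S : ShortComplex C) (hS : S.ShortExact) [h1 : Projective S.X₁]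
    [h2 : Projective S.X₂] : ProjectiveResolution S.X₃ where
  complex := twoComplex S.f
  projective := by
    rintro (_ | _ | n)
    · exact h2
    · exact h1
    · exact (inferInstance : Projective (0 : C))
  π := _
  quasiIso := twoComplex_quasi S hS

variable (K : Type*) [Ring K] [Linear K C] [EnoughProjectives C]

theorem ext_iso_coker (S : ShortComplex C) (hS : S.ShortExact) [h1 : Projective S.X₁]
    [h2 : Projective S.X₂] (N : C) :
    Nonempty (((Ext K C 1).obj (Opposite.op S.X₃)).obj N ≅
      cokernel (((linearYoneda K C).obj N).map S.f.op)) := by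
  let L := (twoRes S hS).complex.linearYonedaObj K N
  have hg : (L.sc' 0 1 2).g = 0 := by
    ext (x : _ ⟶ _)
    exact (isZero_zero C).eq_of_src _ _
  have := (L.sc' 0 1 2).isIso_homologyι hg
  exact ⟨(twoRes S hS).isoExt 1 N ≪≫ L.homologyIsoSc' 0 1 2 (by simp) (by simp) ≪≫
    asIso (L.sc' 0 1 2).homologyι ≪≫ (L.sc' 0 1 2).opcyclesIsoCokernel⟩
end cat

section push
variable {A B : Type} [Ring A] [Ring B]

/-- The submodule `ker ρ • V` of `V`. -/
def kerSub (ρ : A →+* B) (V : Type) [AddCommGroup V] [Module A V] : Submodule A V :=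
  Submodule.span A {x : V | ∃ (a : A) (v : V), ρ a = 0 ∧ x = a • v}

/-- The base change `V / (ker ρ • V)` of `V` along a surjection `ρ`. -/
def Push (ρ : A →+* B) (_ : Function.Surjective ρ) (V : Type) [AddCommGroup V] [Module A V] :
    Type := V ⧸ kerSub ρ V

variable (ρ : A →+* B) (hρ : Function.Surjective ρ) (V : Type) [AddCommGroup V] [Module A V]

instance : AddCommGroup (Push ρ hρ V) := inferInstanceAs (AddCommGroup (V ⧸ kerSub ρ V))

theorem kerSub_quot_smul (a : A) (ha : ρ a = 0) (x : V ⧸ kerSub ρ V) : a • x = 0 := by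
  induction x using Submodule.Quotient.induction_on with
  | _ v =>
    rw [← Submodule.Quotient.mk_smul, Submodule.Quotient.mk_eq_zero]
    exact Submodule.subset_span ⟨a, v, ha, rfl⟩

theorem kerSub_quot_congr {a a' : A} (h : ρ a = ρ a') (x : V ⧸ kerSub ρ V) : a • x = a' • x := by
  rw [← sub_eq_zero, ← sub_smul]
  exact kerSub_quot_smul ρ V _ (by simp [h]) x

noncomputable instance : Module B (Push ρ hρ V) where
  smul b x := (Function.surjInv hρ b • (show V ⧸ kerSub ρ V from x) : V ⧸ kerSub ρ V)
  one_smul x := (kerSub_quot_congr ρ V (by simp [Function.surjInv_eq hρ]) x).trans (one_smul A _)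
  mul_smul b c x := (kerSub_quot_congr ρ V (by simp [Function.surjInv_eq hρ]) x).trans
    (mul_smul (Function.surjInv hρ b) (Function.surjInv hρ c) _)
  smul_zero b := smul_zero (A := V ⧸ kerSub ρ V) (Function.surjInv hρ b)
  smul_add b := smul_add (A := V ⧸ kerSub ρ V) (Function.surjInv hρ b)
  add_smul b c x := (kerSub_quot_congr ρ V (by simp [Function.surjInv_eq hρ]) x).trans
    (add_smul (Function.surjInv hρ b) (Function.surjInv hρ c) _)
  zero_smul x := kerSub_quot_smul ρ V _ (by simp [Function.surjInv_eq hρ]) x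

/-- The projection. -/
noncomputable def toPush : V →ₛₗ[ρ] Push ρ hρ V where
  toFun v := (kerSub ρ V).mkQ v
  map_add' := (kerSub ρ V).mkQ.map_add
  map_smul' a v := ((kerSub ρ V).mkQ.map_smul a v).trans
    (kerSub_quot_congr ρ V (by simp [Function.surjInv_eq hρ]) _)

theorem toPush_surjective : Function.Surjective (toPush ρ hρ V) :=
  (kerSub ρ V).mkQ_surjective

theorem toPush_eq_zero {v : V} : toPush ρ hρ V v = 0 ↔ v ∈ kerSub ρ V :=
  Submodule.Quotient.mk_eq_zero _

variable {ρ V}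

theorem kerSub_kill {W : Type} [AddCommGroup W] [Module B W] (f : V →ₛₗ[ρ] W) {v : V}
    (hv : v ∈ kerSub ρ V) : f v = 0 := by
  induction hv using Submodule.span_induction with
  | mem x h => obtain ⟨a, v, ha, rfl⟩ := h; simp [ha]
  | zero => simp
  | add x y _ _ hx hy => simp [hx, hy]
  | smul a x _ hx => simp [hx]

/-- Semilinear maps out of `V` factor through the push. -/
noncomputable def pushLift {W : Type} [AddCommGroup W] [Module B W] (f : V →ₛₗ[ρ] W) :
    Push ρ hρ V →ₗ[B] W :=
  let g : (V ⧸ kerSub ρ V) →+ W := QuotientAddGroup.lift _ f.toAddMonoidHom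
      (fun v hv => kerSub_kill f hv)
  { toFun := g
    map_add' := g.map_add
    map_smul' := by
      intro b x
      obtain ⟨v, rfl⟩ := toPush_surjective ρ hρ V x
      obtain ⟨a, rfl⟩ := hρ b
      rw [← map_smulₛₗ]
      exact f.map_smulₛₗ a v }

@[simp] theorem pushLift_toPush {W : Type} [AddCommGroup W] [Module B W] (f : V →ₛₗ[ρ] W) (v : V) :
    pushLift hρ f (toPush ρ hρ V v) = f v := rfl

theorem push_hom_ext {W : Type} [AddCommGroup W] [Module B W] {f g : Push ρ hρ V →ₗ[B] W}
    (h : ∀ v, f (toPush ρ hρ V v) = g (toPush ρ hρ V v)) : f = g := by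
  ext x
  obtain ⟨v, rfl⟩ := toPush_surjective ρ hρ V x
  exact h v

theorem push_projective [Module.Projective A V] : Module.Projective B (Push ρ hρ V) := by
  refine Module.Projective.of_lifting_property'' (R := B) (P := Push ρ hρ V) ?_
  intro f hf
  let F := Push ρ hρ V →₀ B
  let _ : Module A F := Module.compHom F ρ
  let _ : Module A (Push ρ hρ V) := Module.compHom _ ρ
  let f' : F →ₗ[A] Push ρ hρ V :=
    { toFun := f, map_add' := f.map_add, map_smul' := fun a x => f.map_smul (ρ a) x }
  let q : V →ₗ[A] Push ρ hρ V :=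
    { toFun := toPush ρ hρ V, map_add' := map_add _, map_smul' := fun a x => (toPush ρ hρ V).map_smulₛₗ a x }
  obtain ⟨g, hg⟩ := Module.projective_lifting_property f' q hf
  let g' : V →ₛₗ[ρ] F :=
    { toFun := g, map_add' := g.map_add, map_smul' := fun a x => g.map_smul a x }
  refine ⟨pushLift hρ g', push_hom_ext hρ fun v => ?_⟩
  exact LinearMap.congr_fun hg v

end push

section gen
open CategoryTheory Limits
variable {K A B : Type} [Field K] [Ring A] [Ring B] [Algebra K A] [Algebra K B]

theorem ext_gen (ρ : A →ₐ[K] B) (hρ : Function.Surjective ρ)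
    (P0 P1 M N : Type) [AddCommGroup P0] [Module A P0] [AddCommGroup P1] [Module A P1]
    [AddCommGroup M] [Module A M] [AddCommGroup N] [Module A N]
    [Module.Projective A P0] [Module.Projective A P1]
    (X Y : ModuleCat.{0} B) (x : M →ₛₗ[(ρ : A →+* B)] X) (hx : Function.Bijective x)
    (y : N →ₛₗ[(ρ : A →+* B)] Y) (hy : Function.Bijective y)
    (f : P1 →ₗ[A] P0) (g : P0 →ₗ[A] M) (hf : Function.Injective f) (hg : Function.Surjective g)
    (hfg : Function.Exact f g)
    (h : ∀ p, f p ∈ kerSub (ρ : A →+* B) P0 → p ∈ kerSub (ρ : A →+* B) P1) :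
    Nonempty (((Ext K (ModuleCat.{0} A) 1).obj (Opposite.op (ModuleCat.of A M))).obj
      (ModuleCat.of A N) ≅ ((Ext K (ModuleCat.{0} B) 1).obj (Opposite.op X)).obj Y) := by
  let σ : A →+* B := ρ
  have hσ : Function.Surjective σ := hρ
  let Q (V : Type) [AddCommGroup V] [Module A V] := Push σ hσ V
  let f' : Q P1 →ₗ[B] Q P0 := pushLift hσ ((toPush σ hσ P0).comp f)
  let g' : Q P0 →ₗ[B] X := pushLift hσ (x.comp g)
  have hf' : Function.Injective f' := by
    rw [injective_iff_map_eq_zero]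
    intro z hz
    obtain ⟨v, rfl⟩ := toPush_surjective σ hσ P1 z
    exact (toPush_eq_zero σ hσ P1).2 (h v ((toPush_eq_zero σ hσ P0).1 hz))
  have hg' : Function.Surjective g' := by
    intro z
    obtain ⟨m, rfl⟩ := hx.2 z
    obtain ⟨p, rfl⟩ := hg m
    exact ⟨toPush σ hσ P0 p, rfl⟩
  have hfg' : Function.Exact f' g' := by
    intro z
    constructor
    · obtain ⟨p, rfl⟩ := toPush_surjective σ hσ P0 z
      intro hz
      have : g p = 0 := hx.1 (hz.trans (map_zero x).symm)
      obtain ⟨p1, rfl⟩ := (hfg p).1 this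
      exact ⟨toPush σ hσ P1 p1, rfl⟩
    · rintro ⟨w, rfl⟩
      obtain ⟨v, rfl⟩ := toPush_surjective σ hσ P1 w
      change x (g (f v)) = 0
      rw [hfg.apply_apply_eq_zero, map_zero]
  let SA : ShortComplex (ModuleCat.{0} A) :=
    ShortComplex.mk (ModuleCat.ofHom f) (ModuleCat.ofHom g) (by ext v; exact hfg.apply_apply_eq_zero v)
  let SB : ShortComplex (ModuleCat.{0} B) :=
    ShortComplex.mk (X₁ := ModuleCat.of B (Q P1)) (X₂ := ModuleCat.of B (Q P0)) (X₃ := X)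
      (ModuleCat.ofHom f') (ModuleCat.ofHom g') (by ext v; exact hfg'.apply_apply_eq_zero v)
  have hSA : SA.ShortExact :=
    { exact := (ShortComplex.ShortExact.moduleCat_exact_iff_function_exact _).mpr hfg
      mono_f := (ModuleCat.mono_iff_injective _).2 hf
      epi_g := (ModuleCat.epi_iff_surjective _).2 hg }
  have hSB : SB.ShortExact :=
    { exact := (ShortComplex.ShortExact.moduleCat_exact_iff_function_exact _).mpr hfg'
      mono_f := (ModuleCat.mono_iff_injective _).2 hf'
      epi_g := (ModuleCat.epi_iff_surjective _).2 hg' }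
  have a1 : Projective SA.X₁ := (IsProjective.iff_projective P1).1 inferInstance
  have a2 : Projective SA.X₂ := (IsProjective.iff_projective P0).1 inferInstance
  have b1 : Projective SB.X₁ := (IsProjective.iff_projective (Q P1)).1 (push_projective hσ)
  have b2 : Projective SB.X₂ := (IsProjective.iff_projective (Q P0)).1 (push_projective hσ)
  obtain ⟨iA⟩ := ext_iso_coker K SA hSA (ModuleCat.of A N)
  obtain ⟨iB⟩ := ext_iso_coker K SB hSB Y
  -- the Hom comparison
  let yi : Y → N := (Equiv.ofBijective y hy).symm
  have hyi : ∀ n, yi (y n) = n := (Equiv.ofBijective y hy).symm_apply_apply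
  have hiy : ∀ z, y (yi z) = z := (Equiv.ofBijective y hy).apply_symm_apply
  let yl (V : Type) [AddCommGroup V] [Module A V] (φ : Q V →ₗ[B] Y) : V →ₗ[A] N :=
    { toFun := fun v => yi (φ (toPush σ hσ V v))
      map_add' := fun u v => hy.1 (by simp [hiy])
      map_smul' := fun a v => hy.1 (by simp [hiy]; rfl) }
  let E (V : Type) [AddCommGroup V] [Module A V] :
      (ModuleCat.of A V ⟶ ModuleCat.of A N) ≃ₗ[K] (ModuleCat.of B (Q V) ⟶ Y) :=
    { toFun := fun φ => ModuleCat.ofHom (pushLift hσ (y.comp φ.hom))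
      map_add' := fun φ ψ => ModuleCat.hom_ext (push_hom_ext hσ fun v => y.map_add _ _)
      map_smul' := fun c φ => ModuleCat.hom_ext (push_hom_ext hσ fun v => by
        refine (y.map_smulₛₗ (algebraMap K A c) (φ.hom v)).trans ?_
        change ρ (algebraMap K A c) • _ = _
        rw [AlgHom.commutes]
        rfl)
      invFun := fun φ => ModuleCat.ofHom (yl V φ.hom)
      left_inv := fun φ => by ext v; exact hyi _
      right_inv := fun φ => ModuleCat.hom_ext (push_hom_ext hσ fun v => hiy _) }
  refine ⟨iA ≪≫ cokernel.mapIso _ _ (E P0).toModuleIso (E P1).toModuleIso ?_ ≪≫ iB.symm⟩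
  refine ModuleCat.hom_ext (LinearMap.ext fun φ => ?_)
  refine ModuleCat.hom_ext (M := ModuleCat.of B (Q P1)) (N := Y) ?_
  refine push_hom_ext hσ fun v => ?_
  rfl
end gen

section harada

theorem radSub_le {A M : Type} [Ring A] [AddCommGroup M] [Module A M] (N : Submodule A M) :
    radSub N ≤ N := Submodule.map_subtype_le _ _

theorem radSub_iter_le {A M : Type} [Ring A] [AddCommGroup M] [Module A M] (N : Submodule A M)
    (c : ℕ) : radSub^[c] N ≤ N := by
  induction c with
  | zero => exact le_rfl
  | succ c ih =>
    rw [Function.iterate_succ_apply']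
    exact (radSub_le _).trans ih

theorem mem_radSub {A M : Type} [Ring A] [AddCommGroup M] [Module A M] (N : Submodule A M)
    (x : N) : (x : M) ∈ radSub N ↔ x ∈ Module.jacobson A N := by
  unfold radSub
  constructor
  · rintro ⟨z, hz, h⟩
    have : z = x := Subtype.ext h
    exact this ▸ hz
  · intro h
    exact ⟨x, h, rfl⟩

theorem mem_radSub_equiv {A M M' : Type} [Ring A] [AddCommGroup M] [Module A M]
    [AddCommGroup M'] [Module A M'] {N : Submodule A M} {N' : Submodule A M'} (φ : N ≃ₗ[A] N')
    (x : N) : (x : M) ∈ radSub N ↔ (φ x : M') ∈ radSub N' := by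
  rw [mem_radSub, mem_radSub,
    ← Module.comap_jacobson_of_bijective (f := φ.toLinearMap) φ.bijective]
  rfl

/-- An isomorphism restricts to the radicals. -/
theorem radSub_restrict {A M M' : Type} [Ring A] [AddCommGroup M] [Module A M]
    [AddCommGroup M'] [Module A M'] {N : Submodule A M} {N' : Submodule A M'} (φ : N ≃ₗ[A] N') :
    ∃ ψ : radSub N ≃ₗ[A] radSub N',
      ∀ x : radSub N, (ψ x : M') = φ ⟨x, radSub_le N x.2⟩ := by
  let F : radSub N →ₗ[A] radSub N' :=
    { toFun := fun x => ⟨φ ⟨x, radSub_le N x.2⟩, (mem_radSub_equiv φ _).1 x.2⟩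
      map_add' := fun x y => Subtype.ext
        (congrArg (fun z : N' => (z : M')) (φ.map_add ⟨x, radSub_le N x.2⟩ ⟨y, radSub_le N y.2⟩))
      map_smul' := fun a x => Subtype.ext
        (congrArg (fun z : N' => (z : M')) (φ.map_smul a ⟨x, radSub_le N x.2⟩)) }
  refine ⟨LinearEquiv.ofBijective F ⟨?_, ?_⟩, fun x => rfl⟩
  · intro x y h
    have h1 := congrArg Subtype.val h
    have h2 := φ.injective (Subtype.ext h1)
    exact Subtype.ext (congrArg (fun z : N => (z : M)) h2)
  · intro z
    let w : N := φ.symm ⟨z, radSub_le N' z.2⟩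
    have hw : φ w = ⟨z, radSub_le N' z.2⟩ := φ.apply_symm_apply _
    refine ⟨⟨w, (mem_radSub_equiv φ w).2 (by rw [hw]; exact z.2)⟩, Subtype.ext ?_⟩
    exact congrArg (fun z : N' => (z : M')) hw

theorem mem_radSub_iter {A M M' : Type} [Ring A] [AddCommGroup M] [Module A M]
    [AddCommGroup M'] [Module A M'] (c : ℕ) : ∀ {N : Submodule A M} {N' : Submodule A M'}
    (φ : N ≃ₗ[A] N') (x : N), (x : M) ∈ radSub^[c] N ↔ (φ x : M') ∈ radSub^[c] N' := by
  induction c with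
  | zero => intro N N' φ x; simp
  | succ c ih =>
    intro N N' φ x
    obtain ⟨ψ, hψ⟩ := radSub_restrict φ
    rw [Function.iterate_succ_apply, Function.iterate_succ_apply]
    constructor
    · intro h
      have := (ih ψ ⟨x, radSub_iter_le _ _ h⟩).1 h
      rwa [hψ] at this
    · intro h
      have hx : (x : M) ∈ radSub N := (mem_radSub_equiv φ x).2 (radSub_iter_le _ _ h)
      refine (ih ψ ⟨x, hx⟩).2 ?_
      rw [hψ]
      exact h

variable {R : Type} [Ring R] (H : HaradaData R)

theorem harada_P_equiv (i : Fin H.m) : ∀ (j : ℕ) (hj : j < H.n i),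
    Nonempty (H.P i ⟨j, hj⟩ ≃ₗ[Rᵐᵒᵖ] rightIdeal R (H.e i ⟨j, hj⟩)) := by
  intro j
  induction j with
  | zero => intro hj; exact ⟨LinearEquiv.refl _ _⟩
  | succ j ih =>
    intro hj
    obtain ⟨φ⟩ := ih (by omega)
    obtain ⟨ψ, -⟩ := radSub_restrict φ
    obtain ⟨χ⟩ := H.rad_iso i ⟨j + 1, hj⟩ (Nat.succ_pos j)
    have : H.P i ⟨j + 1, hj⟩ = radSub (H.P i ⟨j, by omega⟩) :=
      Function.iterate_succ_apply' _ _ _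
    rw [this]
    exact ⟨ψ.trans χ.symm⟩

/-- `J_i = rad^{n_i} (e_{i1} R)`. -/
def haradaJ (i : Fin H.m) : Submodule Rᵐᵒᵖ R :=
  radSub^[H.n i] (rightIdeal R (H.e i ⟨0, H.hn i⟩))

theorem haradaJ_eq (i : Fin H.m) (j : Fin (H.n i)) :
    haradaJ H i = radSub^[H.n i - j.val] (H.P i j) := by
  unfold haradaJ HaradaData.P
  rw [← Function.iterate_add_apply, Nat.sub_add_cancel j.2.le]

theorem mem_rightIdeal {x v : R} : v ∈ rightIdeal R x ↔ ∃ r, v = x * r := by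
  unfold rightIdeal
  rw [Submodule.mem_span_singleton]
  constructor
  · rintro ⟨a, rfl⟩; exact ⟨unop a, rfl⟩
  · rintro ⟨r, rfl⟩; exact ⟨op r, rfl⟩

theorem e_mul_of_mem {e v : R} (he : IsIdempotentElem e) (h : v ∈ rightIdeal R e) : e * v = v := by
  obtain ⟨r, rfl⟩ := mem_rightIdeal.1 h
  rw [← mul_assoc, he.eq]

theorem e_mul_I (p : Σ i : Fin H.m, Fin (H.n i)) {z : R} (hz : z ∈ H.I) :
    H.e p.1 p.2 * z ∈ radSub^[H.n p.1 - p.2.val] (rightIdeal R (H.e p.1 p.2)) := by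
  unfold HaradaData.I at hz
  induction hz using Submodule.iSup_induction' with
  | mem q w hw =>
    have hw' := radSub_iter_le _ _ hw
    by_cases hpq : p = q
    · subst hpq
      rwa [e_mul_of_mem (H.idem _ _) hw']
    · obtain ⟨r, rfl⟩ := mem_rightIdeal.1 hw'
      rw [← mul_assoc, H.orth p q hpq, zero_mul]
      exact Submodule.zero_mem _
  | zero => rw [mul_zero]; exact Submodule.zero_mem _
  | add x y _ _ hx hy => rw [mul_add]; exact Submodule.add_mem _ hx hy

theorem projective_rightIdeal {e : R} (he : IsIdempotentElem e) :
    Module.Projective Rᵐᵒᵖ (rightIdeal R e) := by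
  have : Module.Projective Rᵐᵒᵖ R :=
    Module.Projective.of_equiv (MulOpposite.opLinearEquiv Rᵐᵒᵖ : R ≃ₗ[Rᵐᵒᵖ] Rᵐᵒᵖ).symm
  refine Module.Projective.of_split (M := R) (rightIdeal R e).subtype
    { toFun := fun r => ⟨e * r, mem_rightIdeal.2 ⟨r, rfl⟩⟩
      map_add' := fun x y => Subtype.ext (mul_add e x y)
      map_smul' := fun a x => Subtype.ext (mul_assoc e x (unop a)).symm } ?_
  ext v
  exact e_mul_of_mem he v.2

variable {S : Type} [Ring S] (π : R →+* S)

theorem kerSub_rightIdeal (hker : ∀ x : R, π x = 0 ↔ x ∈ H.I)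
    (p : Σ i : Fin H.m, Fin (H.n i)) (v : rightIdeal R (H.e p.1 p.2)) :
    v ∈ kerSub (RingHom.op π) (rightIdeal R (H.e p.1 p.2)) ↔
      (v : R) ∈ radSub^[H.n p.1 - p.2.val] (rightIdeal R (H.e p.1 p.2)) := by
  constructor
  · intro hv
    suffices kerSub (RingHom.op π) (rightIdeal R (H.e p.1 p.2)) ≤
        Submodule.comap (Submodule.subtype _)
          (radSub^[H.n p.1 - p.2.val] (rightIdeal R (H.e p.1 p.2))) from this hv
    refine Submodule.span_le.2 ?_
    rintro _ ⟨a, w, ha, rfl⟩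
    have ha' : π (unop a) = 0 := congrArg unop ha
    change (w : R) * unop a ∈ radSub^[H.n p.1 - p.2.val] (rightIdeal R (H.e p.1 p.2))
    rw [← e_mul_of_mem (H.idem _ _) w.2, mul_assoc]
    refine e_mul_I H p ((hker _).1 ?_)
    rw [map_mul, ha', mul_zero]
  · intro hv
    refine Submodule.subset_span ⟨op (v : R),
      ⟨H.e p.1 p.2, mem_rightIdeal.2 ⟨1, (mul_one _).symm⟩⟩, ?_, Subtype.ext ?_⟩
    · have : (v : R) ∈ H.I := Submodule.mem_iSup_of_mem p hv
      exact congrArg op ((hker _).2 this)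
    · exact (e_mul_of_mem (H.idem _ _) v.2).symm

theorem kerSub_map {A B : Type} [Ring A] [Ring B] (ρ : A →+* B) {V W : Type} [AddCommGroup V]
    [Module A V] [AddCommGroup W] [Module A W] (f : V →ₗ[A] W) {v : V} (hv : v ∈ kerSub ρ V) :
    f v ∈ kerSub ρ W := by
  suffices kerSub ρ V ≤ (kerSub ρ W).comap f from this hv
  refine Submodule.span_le.2 ?_
  rintro _ ⟨a, w, ha, rfl⟩
  exact Submodule.subset_span ⟨a, f w, ha, f.map_smul a w⟩

theorem kerSub_P (hker : ∀ x : R, π x = 0 ↔ x ∈ H.I)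
    (i : Fin H.m) (j : Fin (H.n i)) (v : H.P i j) :
    v ∈ kerSub (RingHom.op π) (H.P i j) ↔ (v : R) ∈ haradaJ H i := by
  obtain ⟨φ⟩ := harada_P_equiv H i j.1 j.2
  have h1 := kerSub_rightIdeal H π hker ⟨i, j⟩ (φ v)
  rw [haradaJ_eq H i j, mem_radSub_iter _ φ v, ← h1]
  constructor
  · exact kerSub_map _ φ.toLinearMap
  · intro h
    have := kerSub_map _ φ.symm.toLinearMap h
    simpa using! this

theorem projective_P (i : Fin H.m) (j : Fin (H.n i)) : Module.Projective Rᵐᵒᵖ (H.P i j) := by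
  obtain ⟨φ⟩ := harada_P_equiv H i j.1 j.2
  have := projective_rightIdeal (H.idem i j)
  exact Module.Projective.of_equiv φ.symm

theorem P_anti (i : Fin H.m) {k l : Fin (H.n i)} (h : k ≤ l) : H.P i l ≤ H.P i k := by
  unfold HaradaData.P
  rw [← Nat.sub_add_cancel (show k.1 ≤ l.1 from h), Function.iterate_add_apply]
  exact radSub_iter_le _ _

theorem haradaJ_le (i : Fin H.m) (j : Fin (H.n i)) : haradaJ H i ≤ H.P i j := by
  rw [haradaJ_eq H i j]
  exact radSub_iter_le _ _

theorem kill_quot (hker : ∀ x : R, π x = 0 ↔ x ∈ H.I)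
    (i : Fin H.m) (k l : Fin (H.n i)) (r : R) (hr : r ∈ H.I) (x : H.Quot i k l) :
    op r • x = 0 := by
  induction x using Submodule.Quotient.induction_on with
  | _ v =>
    rw [← Submodule.Quotient.mk_smul, Submodule.Quotient.mk_eq_zero]
    refine haradaJ_le H i l ((kerSub_P H π hker i k (op r • v)).1 ?_)
    exact Submodule.subset_span ⟨op r, v, congrArg op ((hker r).2 hr), rfl⟩

/-- The semilinear bijection underlying an isomorphism with a restricted module. -/
noncomputable def restrictInv {M X : Type} [AddCommGroup M] [Module Rᵐᵒᵖ M] [AddCommGroup X]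
    [Module Sᵐᵒᵖ X] (e : RestrictRight π X ≃ₗ[Rᵐᵒᵖ] M) : M →ₛₗ[RingHom.op π] X where
  toFun := e.symm
  map_add' := e.symm.map_add
  map_smul' := e.symm.map_smul

end harada

/-- Proposition 4.4(2).  For fixed `i` and `1 ≤ k < l ≤ n_i`,
`1 ≤ s < t ≤ n_i`, the modules `P_{ik}/P_{il}` and `P_{is}/P_{it}` are annihilated by `I`
(hence are right `R̄`-modules, where `R̄ = R/I` is presented by a surjective `K`-algebra
homomorphism `π : R → S` with kernel `I`), and there is a `K`-vector space isomorphism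
`Ext¹_R(P_{ik}/P_{il}, P_{is}/P_{it}) ≅ Ext¹_{R̄}(P_{ik}/P_{il}, P_{is}/P_{it})`. -/
theorem statement15 (K R : Type) [Field K] [IsAlgClosed K] [Ring R] [Algebra K R]
    [FiniteDimensional K R] (H : HaradaData R)
    (S : Type) [Ring S] [Algebra K S] (π : R →ₐ[K] S) (hsurj : Function.Surjective π)
    (hker : ∀ x : R, π x = 0 ↔ x ∈ H.I)
    (i : Fin H.m) (k l s t : Fin (H.n i)) (hkl : k < l) (hst : s < t) :
    (∀ r : R, r ∈ H.I → ∀ x : H.Quot i k l, op r • x = 0) ∧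
    (∀ r : R, r ∈ H.I → ∀ x : H.Quot i s t, op r • x = 0) ∧
    (∀ X Y : ModuleCat.{0} Sᵐᵒᵖ,
      Nonempty (RestrictRight (π.toRingHom) ↥X ≃ₗ[Rᵐᵒᵖ] H.Quot i k l) →
      Nonempty (RestrictRight (π.toRingHom) ↥Y ≃ₗ[Rᵐᵒᵖ] H.Quot i s t) →
      Nonempty
        (↥(ext1 K Rᵐᵒᵖ (ModuleCat.of Rᵐᵒᵖ (H.Quot i k l)) (ModuleCat.of Rᵐᵒᵖ (H.Quot i s t)))
          ≃ₗ[K] ↥(ext1 K Sᵐᵒᵖ X Y))) := by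
  have hker' : ∀ x : R, π.toRingHom x = 0 ↔ x ∈ H.I := hker
  refine ⟨kill_quot H π.toRingHom hker' i k l, kill_quot H π.toRingHom hker' i s t, ?_⟩
  rintro X Y ⟨ex⟩ ⟨ey⟩
  have := projective_P H i k
  have := projective_P H i l
  have hρ : Function.Surjective (AlgHom.op π) := by
    intro b
    obtain ⟨a, ha⟩ := hsurj (unop b)
    exact ⟨op a, congrArg op ha⟩
  have hle := P_anti H i hkl.le
  obtain ⟨iso⟩ := ext_gen (AlgHom.op π) hρ (H.P i k) (H.P i l) (H.Quot i k l) (H.Quot i s t) X Y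
    (restrictInv π.toRingHom ex) ex.symm.bijective (restrictInv π.toRingHom ey) ey.symm.bijective
    (Submodule.inclusion hle) (Submodule.mkQ _) (Submodule.inclusion_injective hle)
    (Submodule.mkQ_surjective _)
    (by
      intro p
      rw [Submodule.mkQ_apply, Submodule.Quotient.mk_eq_zero]
      constructor
      · intro hp
        exact ⟨⟨p, hp⟩, rfl⟩
      · rintro ⟨q, rfl⟩
        exact q.2)
    (fun p hp => (kerSub_P H π.toRingHom hker' i l p).2
      ((kerSub_P H π.toRingHom hker' i k (Submodule.inclusion hle p)).1 hp))
  exact ⟨iso.toLinearEquiv⟩
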